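/- Let L be a Leibniz algebra over a field, let I be the ideal of L generated by squares, and let G be a subalgebra of L with L = G ⊕ I as vector spaces. If d is a derivation of L such that d(G) = 0 and d(I) ⊆ G, then d = 0. -/

import Mathlib

/-!
The right annihilator `{a | [x,a] = 0 for all x}` is an ideal containing all squares, hence
contains `I`. Applying `d` to `[x,v] = 0` for `v ∈ I` gives `[x, d v] = 0`, so (as `d` kills `G`)
`d L` lies in the right annihilator. Since `G ∩ I = 0`, the bracket on `G` is alternating, hence
`[d v, g] = -[g, d v] = 0` for `v ∈ I`, `g ∈ G`; it follows that `d [x,x] = [d x, x] = 0`.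
Finally `ker d ∩ I` is an ideal, and it contains the squares, so `d` vanishes on `I` and on `L`.
-/

/-- `J` is a (two-sided) ideal of the Leibniz algebra `(L, br)`. -/
def IsLeibnizIdeal {F L : Type*} [Field F] [AddCommGroup L] [Module F L]
    (br : L →ₗ[F] L →ₗ[F] L) (J : Submodule F L) : Prop :=
  (∀ a ∈ J, ∀ y : L, br a y ∈ J) ∧ (∀ a ∈ J, ∀ y : L, br y a ∈ J)

/-- The ideal of the Leibniz algebra `(L, br)` generated by the squares `[x,x]`. -/
def squaresIdeal {F L : Type*} [Field F] [AddCommGroup L] [Module F L]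
    (br : L →ₗ[F] L →ₗ[F] L) : Submodule F L :=
  sInf {J | (∀ x : L, br x x ∈ J) ∧ IsLeibnizIdeal br J}

theorem squaresIdeal_le {F L : Type*} [Field F] [AddCommGroup L] [Module F L]
    (br : L →ₗ[F] L →ₗ[F] L) (J : Submodule F L) (hsq : ∀ x : L, br x x ∈ J)
    (hJ : IsLeibnizIdeal br J) : squaresIdeal br ≤ J :=
  sInf_le ⟨hsq, hJ⟩

theorem sq_mem_squaresIdeal {F L : Type*} [Field F] [AddCommGroup L] [Module F L]
    (br : L →ₗ[F] L →ₗ[F] L) (x : L) : br x x ∈ squaresIdeal br :=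
  (Submodule.mem_sInf).2 fun _ hJ => hJ.1 x

theorem squaresIdeal_isLeibnizIdeal {F L : Type*} [Field F] [AddCommGroup L] [Module F L]
    (br : L →ₗ[F] L →ₗ[F] L) : IsLeibnizIdeal br (squaresIdeal br) :=
  ⟨fun a ha y => (Submodule.mem_sInf).2 fun J hJ => hJ.2.1 a ((Submodule.mem_sInf).1 ha J hJ) y,
   fun a ha y => (Submodule.mem_sInf).2 fun J hJ => hJ.2.2 a ((Submodule.mem_sInf).1 ha J hJ) y⟩

/-- The squares ideal of a right Leibniz algebra lies in the right annihilator,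
which is the kernel of `br.flip`. -/
theorem br_squaresIdeal_eq_zero {F L : Type*} [Field F] [AddCommGroup L] [Module F L]
    (br : L →ₗ[F] L →ₗ[F] L)
    (hLeib : ∀ x y z : L, br x (br y z) = br (br x y) z - br (br x z) y)
    (x v : L) (hv : v ∈ squaresIdeal br) : br x v = 0 := by
  have key : squaresIdeal br ≤ LinearMap.ker br.flip := by
    refine squaresIdeal_le br _ ?_ ⟨?_, ?_⟩
    · intro y
      ext z
      simp [hLeib]
    all_goals
      intro a ha y
      have ha' : ∀ z, br z a = 0 := fun z => LinearMap.congr_fun ha z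
      ext z
      simp [hLeib, ha']
  exact LinearMap.congr_fun (key hv) x

/-- If `L = G ⊕ I` is a Leibniz algebra (with `G` a subalgebra and `I`
the squares ideal) and `d` is a derivation with `d(G) = 0` and `d(I) ⊆ G`, then `d = 0`. -/
theorem derivation_vanishing_on_G_mapping_I_to_G_is_zero
    {F L : Type*} [Field F] [AddCommGroup L] [Module F L]
    (br : L →ₗ[F] L →ₗ[F] L)
    (hLeib : ∀ x y z : L, br x (br y z) = br (br x y) z - br (br x z) y)
    (G : Submodule F L)
    (hGclosed : ∀ x ∈ G, ∀ y ∈ G, br x y ∈ G)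
    (hdirect : G ⊓ squaresIdeal br = ⊥ ∧ G ⊔ squaresIdeal br = ⊤)
    (d : L →ₗ[F] L)
    (hd : ∀ x y : L, d (br x y) = br (d x) y + br x (d y))
    (hdG : ∀ g ∈ G, d g = 0)
    (hdI : ∀ v ∈ squaresIdeal br, d v ∈ G) :
    d = 0 := by
  have hann := br_squaresIdeal_eq_zero br hLeib
  have hdec : ∀ x : L, ∃ g ∈ G, ∃ v ∈ squaresIdeal br, g + v = x := fun x =>
    Submodule.mem_sup.1 (hdirect.2 ▸ Submodule.mem_top)
  -- Apply `d` to `[x, v] = 0`; the term `[d x, v]` vanishes as well.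
  have hdv : ∀ x v : L, v ∈ squaresIdeal br → br x (d v) = 0 := by
    intro x v hv
    have h := hd x v
    rw [hann x v hv, hann (d x) v hv, map_zero, zero_add] at h
    exact h.symm
  have hdL : ∀ x y : L, br x (d y) = 0 := by
    intro x y
    obtain ⟨g, hg, v, hv, rfl⟩ := hdec y
    rw [map_add, hdG g hg, zero_add, hdv x v hv]
  have halt : ∀ g ∈ G, br g g = 0 := by
    intro g hg
    have h : br g g ∈ G ⊓ squaresIdeal br := ⟨hGclosed g hg g hg, sq_mem_squaresIdeal br g⟩
    rwa [hdirect.1, Submodule.mem_bot] at h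
  have hsq : ∀ x : L, d (br x x) = 0 := by
    intro x
    rw [hd, hdL, add_zero]
    obtain ⟨g, hg, v, hv, rfl⟩ := hdec x
    rw [map_add d, hdG g hg, zero_add, map_add, hann (d v) v hv, add_zero]
    -- Polarize `[g + d v, g + d v] = 0` inside `G`.
    have h := halt (g + d v) (G.add_mem hg (hdI v hv))
    simpa [halt g hg, hdL] using h
  have hI : squaresIdeal br ≤ LinearMap.ker d ⊓ squaresIdeal br := by
    have hid := squaresIdeal_isLeibnizIdeal br
    refine squaresIdeal_le br _ (fun x => ⟨hsq x, sq_mem_squaresIdeal br x⟩) ⟨?_, ?_⟩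
    · rintro a ⟨ha, haI⟩ y
      refine ⟨?_, hid.1 a haI y⟩
      have ha' : d a = 0 := ha
      change d (br a y) = 0
      rw [hd, ha', hdL]
      simp
    · rintro a ⟨-, haI⟩ y
      rw [hann y a haI]
      exact Submodule.zero_mem _
  ext x
  obtain ⟨g, hg, v, hv, rfl⟩ := hdec x
  have hv' : d v = 0 := (hI hv).1
  simp [hdG g hg, hv']
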